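/- Fix integers d ≥ 1, l ≥ 1, feature vectors ψ_1, …, ψ_l ∈ ℝ^d, a label ȳ ∈ Y = {−1,+1}^l, and a function L̄ : Y × Y → ℝ. Define F : ℝ^d → ℝ by F(w) = ∑_{y'∈Y} (1 − L̄(y', ȳ)) · log( ∑_{y''∈Y} exp( ∑_{i=1}^{l} (y''_i − y'_i)·⟨w, ψ_i⟩ ) ). Then F is differentiable on ℝ^d and its gradient at every w ∈ ℝ^d is ∇F(w) = −∑_{i=1}^{l} L2(i)·ψ_i + L1·∑_{i=1}^{l} Q_w(i)·ψ_i, where L1 = ∑_{y∈Y} (1 − L̄(y, ȳ)), L2(i) = ∑_{y∈Y} (1 − L̄(y, ȳ))·y_i, Q_w(i) = ∑_{y∈Y} q_w(y)·y_i, q_w(y) = exp(⟨w, ψ̃(y)⟩) / ∑_{y'∈Y} exp(⟨w, ψ̃(y')⟩), and ψ̃(y) = ∑_{i=1}^{l} y_i·ψ_i. -/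

import Mathlib

noncomputable section
open Real RealInnerProductSpace

/-- Real value (`±1`) of a Boolean label coordinate. -/
def signVal (b : Bool) : ℝ := if b then 1 else -1

/-- The aggregated feature vector `ψ̃(y) = ∑_i y_i ψ_i`. -/
def psiTilde {d l : ℕ} (ψ : Fin l → EuclideanSpace ℝ (Fin d)) (y : Fin l → Bool) :
    EuclideanSpace ℝ (Fin d) :=
  ∑ i, signVal (y i) • ψ i

/-- The Gibbs distribution `q_w(y) = exp⟪w, ψ̃(y)⟫ / ∑_{y'} exp⟪w, ψ̃(y')⟫`. -/
def gibbs {d l : ℕ} (ψ : Fin l → EuclideanSpace ℝ (Fin d))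
    (w : EuclideanSpace ℝ (Fin d)) (y : Fin l → Bool) : ℝ :=
  Real.exp ⟪w, psiTilde ψ y⟫ / ∑ y' : Fin l → Bool, Real.exp ⟪w, psiTilde ψ y'⟫

/-- The multi-label logistic loss of the linear hypothesis `h(x,i) = ⟪w, ψ_i⟫` at a fixed
labeled example with features `ψ_i` and label `ȳ`. -/
def mlLogLoss {d l : ℕ} (ψ : Fin l → EuclideanSpace ℝ (Fin d))
    (ybar : Fin l → Bool) (L : (Fin l → Bool) → (Fin l → Bool) → ℝ)
    (w : EuclideanSpace ℝ (Fin d)) : ℝ :=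
  ∑ y' : Fin l → Bool, (1 - L y' ybar) *
    Real.log (∑ y'' : Fin l → Bool,
      Real.exp (∑ i, (signVal (y'' i) - signVal (y' i)) * ⟪w, ψ i⟫))

/-!
Since `∑ i, (y''_i - y'_i) * ⟪w, ψ i⟫ = ⟪w, ψ̃ y''⟫ - ⟪w, ψ̃ y'⟫`, where the second term does not
depend on `y''`, the logarithm indexed by `y'` is the common log-partition function
`log ∑ y, exp ⟪w, ψ̃ y⟫` minus the linear form `⟪w, ψ̃ y'⟫`. The gradient of the log-partition
function is the Gibbs expectation of `ψ̃`; weighting by `1 - L y' ȳ` and summing over `y'` gives the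
two terms.
-/

/-- The log-partition function `log ∑ y, exp (x y)` of a finite family of real scores. -/
def logSumExp {Y : Type*} [Fintype Y] (x : Y → ℝ) : ℝ :=
  Real.log (∑ y, Real.exp (x y))

/-- The Gibbs distribution of a finite family of real scores. At the scores `⟪w, psiTilde ψ y⟫` it
is `gibbs ψ w`. -/
def softmax {Y : Type*} [Fintype Y] (x : Y → ℝ) (y : Y) : ℝ :=
  Real.exp (x y) / ∑ y', Real.exp (x y')

section LogSumExp

variable {Y : Type*} [Fintype Y] [Nonempty Y]

lemma sum_exp_pos (x : Y → ℝ) : 0 < ∑ y, Real.exp (x y) :=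
  Finset.sum_pos (fun _ _ => Real.exp_pos _) Finset.univ_nonempty

lemma logSumExp_sub_const (x : Y → ℝ) (t : ℝ) :
    logSumExp (fun y => x y - t) = logSumExp x - t := by
  simp only [logSumExp, Real.exp_sub, ← Finset.sum_div]
  rw [Real.log_div (sum_exp_pos x).ne' (Real.exp_pos t).ne', Real.log_exp]

variable {E : Type*} [NormedAddCommGroup E] [NormedSpace ℝ E]
  {f : Y → E → ℝ} {f' : Y → E →L[ℝ] ℝ} {w : E}

lemma hasFDerivAt_logSumExp (hf : ∀ y, HasFDerivAt (f y) (f' y) w) :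
    HasFDerivAt (fun v => logSumExp fun y => f y v)
      (∑ y, softmax (fun y => f y w) y • f' y) w := by
  have h_partition : HasFDerivAt (fun v => ∑ y, Real.exp (f y v))
      (∑ y, Real.exp (f y w) • f' y) w :=
    HasFDerivAt.fun_sum fun y _ => (hf y).exp
  refine (h_partition.log (sum_exp_pos _).ne').congr_fderiv ?_
  simp only [Finset.smul_sum, smul_smul, softmax, div_eq_inv_mul]

lemma hasFDerivAt_sum_mul_logSumExp_sub (c : Y → ℝ) (hf : ∀ y, HasFDerivAt (f y) (f' y) w) :
    HasFDerivAt (fun v => ∑ y', c y' * logSumExp fun y => f y v - f y' v)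
      (-(∑ y, c y • f' y) + (∑ y, c y) • ∑ y, softmax (fun y => f y w) y • f' y) w := by
  simp only [logSumExp_sub_const]
  have h_sum := HasFDerivAt.fun_sum (u := Finset.univ) fun y' _ =>
    ((hasFDerivAt_logSumExp hf).sub (hf y')).const_mul (c y')
  refine h_sum.congr_fderiv ?_
  rw [neg_add_eq_sub, Finset.sum_smul, ← Finset.sum_sub_distrib]
  simp only [smul_sub]

end LogSumExp

lemma sum_sum_mul_smul {R M ι Y : Type*} [Semiring R] [AddCommMonoid M] [Module R M]
    [Fintype ι] [Fintype Y] (c : Y → R) (s : Y → ι → R) (ψ : ι → M) :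
    ∑ i, (∑ y, c y * s y i) • ψ i = ∑ y, c y • ∑ i, s y i • ψ i := by
  simp only [Finset.smul_sum, Finset.sum_smul, mul_smul]
  exact Finset.sum_comm

section Gradient

variable {E : Type*} [NormedAddCommGroup E] [InnerProductSpace ℝ E]

lemma sum_sub_mul_inner {ι : Type*} [Fintype ι] (s t : ι → ℝ) (ψ : ι → E) (w : E) :
    ∑ i, (s i - t i) * ⟪w, ψ i⟫ = ⟪w, ∑ i, s i • ψ i⟫ - ⟪w, ∑ i, t i • ψ i⟫ := by
  simp only [inner_sum, real_inner_smul_right, sub_mul, Finset.sum_sub_distrib]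

variable [CompleteSpace E] {Y : Type*} [Fintype Y] [Nonempty Y]

lemma hasGradientAt_sum_mul_logSumExp_inner_sub (c : Y → ℝ) (a : Y → E) (w : E) :
    HasGradientAt (fun v => ∑ y', c y' * logSumExp fun y => ⟪v, a y⟫ - ⟪v, a y'⟫)
      (-(∑ y, c y • a y) + (∑ y, c y) • ∑ y, softmax (fun y => ⟪w, a y⟫) y • a y) w := by
  have h_inner (y : Y) :
      HasFDerivAt (fun v => ⟪v, a y⟫) (InnerProductSpace.toDual ℝ E (a y)) w := by
    simp only [real_inner_comm (a y)]
    exact (InnerProductSpace.toDual ℝ E (a y)).hasFDerivAt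
  rw [hasGradientAt_iff_hasFDerivAt]
  simpa only [map_add, map_neg, map_sum, map_smulₛₗ, conj_trivial]
    using hasFDerivAt_sum_mul_logSumExp_sub c h_inner

theorem gradient_multilabel_logistic_general {ι : Type*} [Fintype ι]
    (s : Y → ι → ℝ) (ψ : ι → E) (c : Y → ℝ) (w : E) :
    HasGradientAt
      (fun v => ∑ y', c y' * logSumExp fun y => ∑ i, (s y i - s y' i) * ⟪v, ψ i⟫)
      (-(∑ i, (∑ y, c y * s y i) • ψ i)
        + (∑ y, c y) •
          ∑ i, (∑ y, softmax (fun y => ⟪w, ∑ j, s y j • ψ j⟫) y * s y i) • ψ i)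
      w := by
  simp only [sum_sub_mul_inner, sum_sum_mul_smul]
  exact hasGradientAt_sum_mul_logSumExp_inner_sub c (fun y => ∑ i, s y i • ψ i) w

end Gradient

theorem gradient_multilabel_logistic (d l : ℕ) (hd : 1 ≤ d) (hl : 1 ≤ l)
    (ψ : Fin l → EuclideanSpace ℝ (Fin d)) (ybar : Fin l → Bool)
    (L : (Fin l → Bool) → (Fin l → Bool) → ℝ) :
    Differentiable ℝ (mlLogLoss ψ ybar L) ∧
    ∀ w : EuclideanSpace ℝ (Fin d),
      HasGradientAt (mlLogLoss ψ ybar L)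
        (-(∑ i, (∑ y : Fin l → Bool, (1 - L y ybar) * signVal (y i)) • ψ i)
          + (∑ y : Fin l → Bool, (1 - L y ybar)) •
            ∑ i, (∑ y : Fin l → Bool, gibbs ψ w y * signVal (y i)) • ψ i)
        w := by
  have h_grad := gradient_multilabel_logistic_general (fun y i => signVal (y i)) ψ (1 - L · ybar)
  exact ⟨fun w => (h_grad w).differentiableAt, h_grad⟩
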